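/- Let ν > 0 and define C : ℝ⁴ → ℝ by C(x,t,u,p) = −0.01·t·(t·u − x)²·p². Let u : ℝ × ℝ → ℝ be a smooth (C^∞) solution of the modified Burgers equation ∂u/∂t + u·∂u/∂x − ν·∂²u/∂x² + ∂/∂x[ C(x,t,u(x,t),∂u/∂x(x,t))·∂u/∂x(x,t) ] = 0 on all of ℝ². Then for every λ > 0, the function v(x,t) = λ·u(x, λt) is a smooth solution of the modified equation with viscosity λν: ∂v/∂t + v·∂v/∂x − (λν)·∂²v/∂x² + ∂/∂x[ C(x,t,v,∂v/∂x)·∂v/∂x ] = 0 everywhere (the differential approximation of the invariant scheme is preserved by the dilatation (x,t,u,ν) ↦ (x, λ⁻¹t, λu, λν)). -/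

import Mathlib

/-- Partial derivative with respect to the first (space) variable. -/
noncomputable def pdx (u : ℝ × ℝ → ℝ) : ℝ × ℝ → ℝ :=
  fun p => deriv (fun y => u (y, p.2)) p.1

/-- Partial derivative with respect to the second (time) variable. -/
noncomputable def pdt (u : ℝ × ℝ → ℝ) : ℝ × ℝ → ℝ :=
  fun p => deriv (fun s => u (p.1, s)) p.2

/-- The artificial viscosity coefficient \`C(x,t,u,p) = −0.01 t (tu − x)² p²\`. -/
noncomputable def Cvisc (x t u p : ℝ) : ℝ := -0.01 * t * (t * u - x) ^ 2 * p ^ 2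

/-- \`u\` is a smooth solution of the modified Burgers equation
\`u_t + u u_x − ν u_xx + (C(x,t,u,u_x) u_x)_x = 0\`, the differential
approximation of the invariant scheme. -/
def IsModifiedBurgersSolution (ν : ℝ) (u : ℝ × ℝ → ℝ) : Prop :=
  ContDiff ℝ (⊤ : ℕ∞) u ∧
    ∀ p : ℝ × ℝ,
      pdt u p + u p * pdx u p - ν * pdx (pdx u) p
        + pdx (fun q => Cvisc q.1 q.2 (u q) (pdx u q) * pdx u q) p = 0

theorem pdx_scale (w : ℝ × ℝ → ℝ) (c l : ℝ) :
    pdx (fun p => c * w (p.1, l * p.2)) = fun p => c * pdx w (p.1, l * p.2) := by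
  funext p
  simp only [pdx]
  exact deriv_const_mul_field c

theorem pdt_scale (w : ℝ × ℝ → ℝ) (c l : ℝ) :
    pdt (fun p => c * w (p.1, l * p.2)) = fun p => c * (l * pdt w (p.1, l * p.2)) := by
  funext p
  simp only [pdt]
  rw [deriv_const_mul_field c]
  have := deriv_comp_mul_left l (fun s => w (p.1, s)) p.2
  rw [this, smul_eq_mul]

/-- The differential approximation of the invariant scheme is preserved by the
dilatation `(x,t,u,ν) ↦ (x, λ⁻¹t, λu, λν)` acting also on the viscosity. -/
theorem modified_burgers_invariant_dilatation_viscosity (ν : ℝ) (hν : 0 < ν)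
    (u : ℝ × ℝ → ℝ) (hu : IsModifiedBurgersSolution ν u) (l : ℝ) (hl : 0 < l) :
    IsModifiedBurgersSolution (l * ν) (fun p => l * u (p.1, l * p.2)) := by
  obtain ⟨hs, he⟩ := hu
  refine ⟨?_, ?_⟩
  · exact contDiff_const.mul
      (hs.comp (contDiff_fst.prodMk (contDiff_const.mul contDiff_snd)))
  · intro p
    have hC : (fun q : ℝ × ℝ => Cvisc q.1 q.2 (l * u (q.1, l * q.2)) (l * pdx u (q.1, l * q.2))
          * (l * pdx u (q.1, l * q.2)))
        = fun q : ℝ × ℝ => l ^ 2 * (fun q : ℝ × ℝ => Cvisc q.1 q.2 (u q) (pdx u q) * pdx u q)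
            (q.1, l * q.2) := by
      funext q
      simp only [Cvisc]
      ring
    rw [pdt_scale, pdx_scale, pdx_scale]
    simp only []
    have hD := pdx_scale (fun q : ℝ × ℝ => Cvisc q.1 q.2 (u q) (pdx u q) * pdx u q) (l ^ 2) l
    rw [hC, congrFun hD p]
    have h := he (p.1, l * p.2)
    linear_combination l ^ 2 * h
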